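/- Let G be an exchange network and let α be an ε-fixed point of the natural dynamics, with earnings vector γ. Then γ satisfies the 6ε-balance property at every edge: for all (i,j)∈E, |[γ_i − max_{k∈∂i∖j}(w_{ik}−γ_k)_+] − [γ_j − max_{l∈∂j∖i}(w_{jl}−γ_l)_+]| ≤ 6ε. -/

import Mathlib

namespace EN

open Finset

variable {V : Type*}

/-- The nonnegative part `(x)₊ = max (x, 0)`. -/
noncomputable def pos (x : ℝ) : ℝ := max x 0

variable [Fintype V] [DecidableEq V]

/-- The maximum of `f` over a finite set of vertices (`0` over the empty set). -/
noncomputable def fmax (s : Finset V) (f : V → ℝ) : ℝ := ⨆ k ∈ s, f k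

/-- The offer from `i` to `j` given messages `α` and weights `w`:
`m_{i→j} = (w_{ij} − α_{i\j})₊ − (1/2) (w_{ij} − α_{i\j} − α_{j\i})₊`. -/
noncomputable def offer (w α : V → V → ℝ) (i j : V) : ℝ :=
  pos (w i j - α i j) - (1 / 2) * pos (w i j - α i j - α j i)

/-- The update operator `T` of the natural dynamics:
`(Tα)_{i\j} = max_{k ∈ ∂i \ j} m_{k→i}`. -/
noncomputable def upd (G : SimpleGraph V) [DecidableRel G.Adj] (w α : V → V → ℝ)
    (i j : V) : ℝ :=
  fmax ((G.neighborFinset i).erase j) fun k => offer w α k i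

/-- The earnings estimate `γ_i = max_{k ∈ ∂i} m_{k→i}`. -/
noncomputable def earn (G : SimpleGraph V) [DecidableRel G.Adj] (w α : V → V → ℝ)
    (i : V) : ℝ :=
  fmax (G.neighborFinset i) fun k => offer w α k i

/-- Exchange network weights: symmetric and positive on every edge. -/
def GoodW (G : SimpleGraph V) (w : V → V → ℝ) : Prop :=
  (∀ i j, w i j = w j i) ∧ ∀ i j, G.Adj i j → 0 < w i j

/-- A valid message vector: nonnegative on all directed edges. -/
def ValidMsg (G : SimpleGraph V) (α : V → V → ℝ) : Prop :=
  ∀ i j, G.Adj i j → 0 ≤ α i j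

/-- Fixed point of the natural-dynamics update operator. -/
def IsFixedPt (G : SimpleGraph V) [DecidableRel G.Adj] (w α : V → V → ℝ) : Prop :=
  ∀ i j, G.Adj i j → upd G w α i j = α i j

/-- `ε`-fixed point. -/
def IsEpsFixedPt (G : SimpleGraph V) [DecidableRel G.Adj] (w α : V → V → ℝ) (ε : ℝ) : Prop :=
  ∀ i j, G.Adj i j → |α i j - upd G w α i j| ≤ ε

/-- The natural dynamics with damping factor `κ`: `α^{t+1} = (1−κ) α^t + κ T α^t`. -/
noncomputable def dyn (G : SimpleGraph V) [DecidableRel G.Adj] (w : V → V → ℝ) (κ : ℝ)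
    (α0 : V → V → ℝ) : ℕ → V → V → ℝ
  | 0 => α0
  | t + 1 => fun i j =>
      (1 - κ) * dyn G w κ α0 t i j + κ * upd G w (dyn G w κ α0 t) i j

/-- Sup norm over directed edges. -/
noncomputable def msgSup (G : SimpleGraph V) [DecidableRel G.Adj] (f : V → V → ℝ) : ℝ :=
  ⨆ p : V × V, if G.Adj p.1 p.2 then |f p.1 p.2| else 0

/-- `M` is a matching of `G`: a symmetric subrelation of adjacency pairing each node
with at most one partner. -/
structure IsMatching (G : SimpleGraph V) (M : V → V → Prop) : Prop where
  subset : ∀ i j, M i j → G.Adj i j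
  symm : ∀ i j, M i j → M j i
  unique : ∀ i j k, M i j → M i k → j = k

/-- `(M, γ)` is a trade outcome. -/
def IsOutcome (G : SimpleGraph V) (w : V → V → ℝ) (M : V → V → Prop) (γ : V → ℝ) : Prop :=
  IsMatching G M ∧ (∀ i, 0 ≤ γ i) ∧ (∀ i j, M i j → γ i + γ j = w i j) ∧
    ∀ i, (∀ j, ¬M i j) → γ i = 0

/-- Stability of an outcome. -/
def Stable (G : SimpleGraph V) (w : V → V → ℝ) (M : V → V → Prop) (γ : V → ℝ) : Prop :=
  ∀ i j, G.Adj i j → ¬M i j → w i j ≤ γ i + γ j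

/-- The best alternative of `i` excluding `j`: `max_{k ∈ ∂i \ j} (w_{ik} − γ_k)₊`. -/
noncomputable def bestAlt (G : SimpleGraph V) [DecidableRel G.Adj] (w : V → V → ℝ)
    (γ : V → ℝ) (i j : V) : ℝ :=
  fmax ((G.neighborFinset i).erase j) fun k => pos (w i k - γ k)

/-- Balance of an outcome. -/
def Balanced (G : SimpleGraph V) [DecidableRel G.Adj] (w : V → V → ℝ) (M : V → V → Prop)
    (γ : V → ℝ) : Prop :=
  ∀ i j, M i j → γ i - bestAlt G w γ i j = γ j - bestAlt G w γ j i

/-- Nash bargaining solution: a stable and balanced trade outcome. -/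
def IsNBSolution (G : SimpleGraph V) [DecidableRel G.Adj] (w : V → V → ℝ)
    (M : V → V → Prop) (γ : V → ℝ) : Prop :=
  IsOutcome G w M γ ∧ Stable G w M γ ∧ Balanced G w M γ

/-- `ε`-balance. -/
def EpsBalanced (G : SimpleGraph V) [DecidableRel G.Adj] (w : V → V → ℝ)
    (M : V → V → Prop) (γ : V → ℝ) (ε : ℝ) : Prop :=
  ∀ i j, M i j → |(γ i - bestAlt G w γ i j) - (γ j - bestAlt G w γ j i)| ≤ ε

/-- `ε`-Nash bargaining solution. -/
def IsEpsNB (G : SimpleGraph V) [DecidableRel G.Adj] (w : V → V → ℝ)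
    (M : V → V → Prop) (γ : V → ℝ) (ε : ℝ) : Prop :=
  IsOutcome G w M γ ∧ Stable G w M γ ∧ EpsBalanced G w M γ ε

/-- Feasible point of the LP relaxation of maximum weight matching. -/
def LPFeasible (G : SimpleGraph V) [DecidableRel G.Adj] (x : V → V → ℝ) : Prop :=
  (∀ i j, x i j = x j i) ∧ (∀ i j, 0 ≤ x i j) ∧ (∀ i j, ¬G.Adj i j → x i j = 0) ∧
    ∀ i, ∑ j ∈ G.neighborFinset i, x i j ≤ 1

/-- LP objective `Σ_{(i,j)∈E} w_{ij} x_{ij}` (each undirected edge counted once). -/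
noncomputable def LPval (G : SimpleGraph V) [DecidableRel G.Adj] (w x : V → V → ℝ) : ℝ :=
  (1 / 2) * ∑ i, ∑ j ∈ G.neighborFinset i, w i j * x i j

/-- Optimal point of the LP relaxation of maximum weight matching. -/
def LPOptimal (G : SimpleGraph V) [DecidableRel G.Adj] (w x : V → V → ℝ) : Prop :=
  LPFeasible G x ∧ ∀ y, LPFeasible G y → LPval G w y ≤ LPval G w x

def Integral (x : V → V → ℝ) : Prop := ∀ i j, x i j = 0 ∨ x i j = 1

def HalfIntegral (x : V → V → ℝ) : Prop := ∀ i j, x i j = 0 ∨ x i j = 1 / 2 ∨ x i j = 1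

open Classical in
/-- The LP point associated to a matching. -/
noncomputable def mInd (M : V → V → Prop) (i j : V) : ℝ := if M i j then 1 else 0

/-- The state with offers `m` induces the matching `M`: every node receiving a positive
offer is matched and receives its unique best offer from its partner, and every node
with zero earnings is unmatched. -/
def Induces (G : SimpleGraph V) [DecidableRel G.Adj] (m : V → V → ℝ)
    (M : V → V → Prop) : Prop :=
  IsMatching G M ∧
    (∀ i, (∃ k, G.Adj i k ∧ 0 < m k i) →
      ∃ j, M i j ∧ ∀ k, G.Adj i k → k ≠ j → m k i < m j i) ∧
    ∀ i, (fmax (G.neighborFinset i) fun k => m k i) = 0 → ∀ j, ¬M i j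

/-- Feasibility for the dual LP. -/
def DualFeasible (G : SimpleGraph V) (w : V → V → ℝ) (y : V → ℝ) : Prop :=
  (∀ i, 0 ≤ y i) ∧ ∀ i j, G.Adj i j → w i j ≤ y i + y j

/-- Optimality for the dual LP. -/
def DualOptimal (G : SimpleGraph V) (w : V → V → ℝ) (y : V → ℝ) : Prop :=
  DualFeasible G w y ∧ ∀ z, DualFeasible G w z → ∑ i, y i ≤ ∑ i, z i

/-- The unmatched balance property at every edge. -/
def UnmatchedBalance (G : SimpleGraph V) [DecidableRel G.Adj] (w : V → V → ℝ)
    (y : V → ℝ) : Prop :=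
  ∀ i j, G.Adj i j → y i - bestAlt G w y i j = y j - bestAlt G w y j i

/-! ### Unequal division -/

/-- Valid split fractions: `r_{ij} ∈ (0,1)` with `r_{ij} + r_{ji} = 1` on every edge. -/
def GoodR (G : SimpleGraph V) (r : V → V → ℝ) : Prop :=
  ∀ i j, G.Adj i j → 0 < r i j ∧ r i j < 1 ∧ r i j + r j i = 1

/-- The UD offer from `i` to `j`. -/
noncomputable def offerUD (w r α : V → V → ℝ) (i j : V) : ℝ :=
  pos (w i j - α i j) - r i j * pos (w i j - α i j - α j i)

/-- The UD update operator. -/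
noncomputable def updUD (G : SimpleGraph V) [DecidableRel G.Adj] (w r α : V → V → ℝ)
    (i j : V) : ℝ :=
  fmax ((G.neighborFinset i).erase j) fun k => offerUD w r α k i

/-- The UD earnings estimate. -/
noncomputable def earnUD (G : SimpleGraph V) [DecidableRel G.Adj] (w r α : V → V → ℝ)
    (i : V) : ℝ :=
  fmax (G.neighborFinset i) fun k => offerUD w r α k i

/-- Fixed point of the UD update operator. -/
def IsFixedPtUD (G : SimpleGraph V) [DecidableRel G.Adj] (w r α : V → V → ℝ) : Prop :=
  ∀ i j, G.Adj i j → updUD G w r α i j = α i j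

/-- Correct division. -/
def CorrectDiv (G : SimpleGraph V) [DecidableRel G.Adj] (w r : V → V → ℝ)
    (M : V → V → Prop) (γ : V → ℝ) : Prop :=
  ∀ i j, M i j →
    (1 / r i j) * (γ i - bestAlt G w γ i j) = (1 / r j i) * (γ j - bestAlt G w γ j i)

/-- UD solution: a stable trade outcome satisfying correct division. -/
def IsUDSolution (G : SimpleGraph V) [DecidableRel G.Adj] (w r : V → V → ℝ)
    (M : V → V → Prop) (γ : V → ℝ) : Prop :=
  IsOutcome G w M γ ∧ Stable G w M γ ∧ CorrectDiv G w r M γ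

/-- Edge surplus. -/
noncomputable def surp (G : SimpleGraph V) [DecidableRel G.Adj] (w : V → V → ℝ)
    (γ : V → ℝ) (i j : V) : ℝ :=
  w i j - bestAlt G w γ i j - bestAlt G w γ j i

open Classical in
/-- The rebalanced allocation `γ^reb`. -/
noncomputable def reb (G : SimpleGraph V) [DecidableRel G.Adj] (w r : V → V → ℝ)
    (M : V → V → Prop) (γ : V → ℝ) (i : V) : ℝ :=
  if h : ∃ j, M i j then
    bestAlt G w γ i h.choose + r i h.choose * surp G w γ i h.choose
  else 0

/-- The Edge Rebalancing iteration `γ^{t+1} = κ γ^reb(γ^t) + (1−κ) γ^t`. -/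
noncomputable def rebIter (G : SimpleGraph V) [DecidableRel G.Adj] (w r : V → V → ℝ)
    (M : V → V → Prop) (κ : ℝ) (γ0 : V → ℝ) : ℕ → V → ℝ
  | 0 => γ0
  | t + 1 => fun i =>
      κ * reb G w r M (rebIter G w r M κ γ0 t) i + (1 - κ) * rebIter G w r M κ γ0 t i

theorem fmax_le' {s : Finset V} {f : V → ℝ} {c : ℝ} (hc : 0 ≤ c)
    (h : ∀ k ∈ s, f k ≤ c) : fmax s f ≤ c :=
  Real.iSup_le (fun k => Real.iSup_le (fun hk => h k hk) hc) hc

theorem le_fmax' {s : Finset V} {f : V → ℝ} {k : V} (hk : k ∈ s) : f k ≤ fmax s f := by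
  have h := le_ciSup (f := fun k => ⨆ (_ : k ∈ s), f k) (Set.finite_range _).bddAbove k
  have h2 : (⨆ (_ : k ∈ s), f k) = f k := ciSup_pos hk
  simp only [h2] at h
  exact h

theorem fmax_nonneg' {s : Finset V} {f : V → ℝ} (h : ∀ k ∈ s, 0 ≤ f k) : 0 ≤ fmax s f :=
  Real.iSup_nonneg fun k => Real.iSup_nonneg fun hk => h k hk

theorem pos_cases (x : ℝ) : (0 ≤ x ∧ pos x = x) ∨ (x ≤ 0 ∧ pos x = 0) := by
  rcases le_total 0 x with h | h
  · exact Or.inl ⟨h, max_eq_left h⟩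
  · exact Or.inr ⟨h, max_eq_right h⟩

theorem offer_nonneg' {w α : V → V → ℝ} {i j : V} (h : 0 ≤ α j i) : 0 ≤ offer w α i j := by
  unfold offer
  rcases pos_cases (w i j - α i j) with ⟨a, b⟩ | ⟨a, b⟩ <;>
  rcases pos_cases (w i j - α i j - α j i) with ⟨c, d⟩ | ⟨c, d⟩ <;> rw [b, d] <;> linarith

theorem earn_approx (G : SimpleGraph V) [DecidableRel G.Adj]
    (w : V → V → ℝ) (hw : GoodW G w) (ε : ℝ) (hε : 0 < ε)
    (α : V → V → ℝ) (hval : ValidMsg G α) (hefp : IsEpsFixedPt G w α ε)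
    (i j : V) (hij : G.Adj i j) :
    |earn G w α i - (α i j + 1 / 2 * pos (w i j - α i j - α j i))| ≤ ε := by
  have hai := hval i j hij
  have haj := hval j i hij.symm
  have hu := abs_le.1 (hefp i j hij)
  have hoff : offer w α j i = pos (w i j - α j i) - 1 / 2 * pos (w i j - α i j - α j i) := by
    unfold offer
    rw [hw.1 j i, sub_right_comm]
  have hpos : 0 ≤ pos (w i j - α i j - α j i) := le_max_right _ _
  have hmax : offer w α j i ≤ α i j + 1 / 2 * pos (w i j - α i j - α j i) := by
    rw [hoff]
    rcases pos_cases (w i j - α j i) with ⟨a, b⟩ | ⟨a, b⟩ <;>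
    rcases pos_cases (w i j - α i j - α j i) with ⟨c, d⟩ | ⟨c, d⟩ <;> rw [b, d] <;> linarith
  have hup : earn G w α i ≤ α i j + 1 / 2 * pos (w i j - α i j - α j i) + ε := by
    refine fmax_le' (by linarith) fun k hk => ?_
    by_cases hkj : k = j
    · subst hkj; linarith
    · have : offer w α k i ≤ upd G w α i j :=
        le_fmax' (f := fun k => offer w α k i) (Finset.mem_erase.2 ⟨hkj, hk⟩)
      linarith
  have h1 : offer w α j i ≤ earn G w α i :=
    le_fmax' (f := fun k => offer w α k i) (by simpa using hij)
  have h2 : upd G w α i j ≤ earn G w α i :=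
    fmax_le' ((offer_nonneg' hai).trans h1) fun k hk =>
      le_fmax' (f := fun k => offer w α k i) (Finset.mem_of_mem_erase hk)
  have hlo : α i j + 1 / 2 * pos (w i j - α i j - α j i) - ε ≤ earn G w α i := by
    rw [hoff] at h1
    rcases pos_cases (w i j - α j i) with ⟨a, b⟩ | ⟨a, b⟩ <;>
    rcases pos_cases (w i j - α i j - α j i) with ⟨c, d⟩ | ⟨c, d⟩ <;> rw [b, d] at h1 <;>
      rw [d] <;> linarith
  rw [abs_le]; constructor <;> linarith

theorem pos_approx (G : SimpleGraph V) [DecidableRel G.Adj]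
    (w : V → V → ℝ) (hw : GoodW G w) (ε : ℝ) (hε : 0 < ε)
    (α : V → V → ℝ) (hval : ValidMsg G α) (hefp : IsEpsFixedPt G w α ε)
    (i k : V) (hik : G.Adj i k) :
    |pos (w i k - earn G w α k) - offer w α k i| ≤ ε := by
  have hai := hval i k hik
  have hak := hval k i hik.symm
  have h := abs_le.1 (earn_approx G w hw ε hε α hval hefp k i hik.symm)
  unfold offer
  rw [hw.1 i k, abs_le]
  rcases pos_cases (w k i - α k i) with ⟨a, b⟩ | ⟨a, b⟩ <;>
  rcases pos_cases (w k i - α k i - α i k) with ⟨c, d⟩ | ⟨c, d⟩ <;>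
  rcases pos_cases (w k i - earn G w α k) with ⟨e, f⟩ | ⟨e, f⟩ <;>
  rw [d] at h <;> rw [b, d, f] <;> constructor <;> linarith

theorem bestAlt_approx (G : SimpleGraph V) [DecidableRel G.Adj]
    (w : V → V → ℝ) (hw : GoodW G w) (ε : ℝ) (hε : 0 < ε)
    (α : V → V → ℝ) (hval : ValidMsg G α) (hefp : IsEpsFixedPt G w α ε)
    (i j : V) :
    |bestAlt G w (earn G w α) i j - upd G w α i j| ≤ ε := by
  have key : ∀ k ∈ (G.neighborFinset i).erase j, G.Adj i k := fun k hk => by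
    simpa using Finset.mem_of_mem_erase hk
  have hu0 : 0 ≤ upd G w α i j :=
    fmax_nonneg' fun k hk => offer_nonneg' (hval i k (key k hk))
  have hb0 : 0 ≤ bestAlt G w (earn G w α) i j :=
    fmax_nonneg' fun k hk => le_max_right _ _
  have h1 : bestAlt G w (earn G w α) i j ≤ upd G w α i j + ε := by
    refine fmax_le' (by linarith) fun k hk => ?_
    have h := abs_le.1 (pos_approx G w hw ε hε α hval hefp i k (key k hk))
    have : offer w α k i ≤ upd G w α i j := le_fmax' (f := fun k => offer w α k i) hk
    linarith
  have h2 : upd G w α i j ≤ bestAlt G w (earn G w α) i j + ε := by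
    refine fmax_le' (by linarith) fun k hk => ?_
    have h := abs_le.1 (pos_approx G w hw ε hε α hval hefp i k (key k hk))
    have : pos (w i k - earn G w α k) ≤ bestAlt G w (earn G w α) i j :=
      le_fmax' (f := fun k => pos (w i k - earn G w α k)) hk
    linarith
  rw [abs_le]; constructor <;> linarith

/-- The earnings vector of an `ε`-fixed point satisfies the
`6ε`-balance property at every edge. -/
theorem eps_fixedPoint_sixEps_balance
    {V : Type*} [Fintype V] [DecidableEq V] (G : SimpleGraph V) [DecidableRel G.Adj]
    (w : V → V → ℝ) (hw : GoodW G w)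
    (ε : ℝ) (hε : 0 < ε)
    (α : V → V → ℝ) (hval : ValidMsg G α) (hefp : IsEpsFixedPt G w α ε) :
    ∀ i j, G.Adj i j →
      |(earn G w α i - bestAlt G w (earn G w α) i j) -
        (earn G w α j - bestAlt G w (earn G w α) j i)| ≤ 6 * ε := by
  intro i j hij
  have a1 := abs_le.1 (earn_approx G w hw ε hε α hval hefp i j hij)
  have a2 := abs_le.1 (earn_approx G w hw ε hε α hval hefp j i hij.symm)
  have b1 := abs_le.1 (bestAlt_approx G w hw ε hε α hval hefp i j)
  have b2 := abs_le.1 (bestAlt_approx G w hw ε hε α hval hefp j i)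
  have c1 := abs_le.1 (hefp i j hij)
  have c2 := abs_le.1 (hefp j i hij.symm)
  rw [hw.1 j i, sub_right_comm] at a2
  rw [abs_le]; constructor <;> linarith
end EN
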